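/- Let n ≥ 1 be an integer. Suppose Λ̃ : {x ∈ ℝ^{n+4} : x_{n+4} ≥ 0} → ℝ is continuous, twice continuously differentiable on the open half-space ℝ^{n+4}₊, satisfies −ΔΛ̃(x) = x_{n+4}²·|x + e_{n+4}|^{−n−2} for all x ∈ ℝ^{n+4}₊, Λ̃(x) = 0 whenever x_{n+4} = 0, and Λ̃(x) → 0 as |x| → ∞. Then Λ̃(x) ≥ (x_{n+4}³ / (6n(1 + x_{n+4}))) · |x + e_{n+4}|^{−n} ≥ 0 for every x with x_{n+4} ≥ 0. -/

import Mathlib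

/-!
The proof compares `Λ` with the functions
`w_m(x) = t³ / (6m(1+t)) · |x+e|^{-m}`, where `t = x_{n+4}` and `m ≥ n` is a real parameter.

With `g(t) = t³/(1+t)` one has `g'' > 0` for `t > 0`, `((1+t) g)' = 3t²`, and, in dimension `n+4`,
`Δ(g |x+e|^{-m}) = g''|x+e|^{-m} - m (2(1+t) g' + (n+2-m) g) |x+e|^{-m-2}`.
As `n+2-m ≤ 2` and `|x+e| ≥ 1`, this gives the strict inequality
`-Δ w_m < t² |x+e|^{-m-2} ≤ t² |x+e|^{-n-2} = -ΔΛ` (`test_ineq`).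
If `m > 2` then `w_m → 0` at infinity, because `g ≤ t² ≤ |x+e|²`; a negative value of `Λ - w_m`
would therefore yield an interior minimum, where the second derivatives along the coordinate axes
are nonnegative, against the strict inequality. Hence `w_m ≤ Λ` (`barrier_le`).

For `n ≥ 3` the choice `m = n` is the claim. For `n ≤ 2` the function `w_n` need not tend to zero,
but then the hypotheses are contradictory: letting `m ↓ 2` in `w_m ≤ Λ` at the points `t e` gives
`Λ(t e) ≥ t³ / (12 (1+t)³) ≥ 1/96` for all `t ≥ 1`, so `Λ` cannot decay.
-/


open Set

/-- The Euclidean Laplacian `Δf = Σᵢ ∂²f/∂xᵢ²`. -/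
noncomputable def laplacian {m : ℕ} (f : EuclideanSpace ℝ (Fin m) → ℝ)
    (x : EuclideanSpace ℝ (Fin m)) : ℝ :=
  ∑ i : Fin m, fderiv ℝ (fun y => fderiv ℝ f y (EuclideanSpace.single i 1)) x
    (EuclideanSpace.single i 1)

open Filter Topology

/-- The barrier `w_m`, with `l` the index of the coordinate normal to the boundary. -/
noncomputable def barrier {d : ℕ} (l : Fin d) (m : ℝ) (x : EuclideanSpace ℝ (Fin d)) : ℝ :=
  (x l) ^ 3 / (6 * m * (1 + x l)) * ‖x + EuclideanSpace.single l (1 : ℝ)‖ ^ (-m)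

lemma second_deriv_nonneg {f f' : ℝ → ℝ} {d : ℝ} (hmin : IsLocalMin f 0)
    (h1 : ∀ᶠ s in 𝓝 (0 : ℝ), HasDerivAt f (f' s) s) (h2 : HasDerivAt f' d 0) : 0 ≤ d := by
  by_contra! hd
  have e1 : deriv f =ᶠ[𝓝 0] f' := h1.mono fun s hs => hs.deriv
  have e2 : deriv (deriv f) 0 = d := by rw [e1.deriv_eq, h2.deriv]
  have hmax : IsLocalMax f 0 := isLocalMax_of_deriv_deriv_neg (by rw [e2]; exact hd)
    hmin.deriv_eq_zero h1.self_of_nhds.continuousAt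
  have hc : f =ᶠ[𝓝 0] fun _ => f 0 := by
    filter_upwards [hmin, hmax] with s h h'
    exact le_antisymm h' h
  have h3 : deriv f =ᶠ[𝓝 0] fun _ => 0 := by
    simpa using hc.deriv
  have : deriv (deriv f) 0 = 0 := by rw [h3.deriv_eq]; simp
  linarith

lemma hasDerivAt_profile {t : ℝ} (ht : 1 + t ≠ 0) :
    HasDerivAt (fun t : ℝ => t ^ 3 / (1 + t)) (2 * t - 1 + 1 / (1 + t) ^ 2) t := by
  have h := ((hasDerivAt_id t).pow 3).div ((hasDerivAt_id t).const_add 1) ht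
  refine h.congr_deriv ?_
  simp only [id, Pi.pow_apply]
  field_simp
  ring

lemma hasDerivAt_profile' {t : ℝ} (ht : 1 + t ≠ 0) :
    HasDerivAt (fun t : ℝ => 2 * t - 1 + 1 / (1 + t) ^ 2) (2 - 2 / (1 + t) ^ 3) t := by
  have h := (((hasDerivAt_id t).const_mul 2).sub_const 1).add
    ((hasDerivAt_const t (1 : ℝ)).div (((hasDerivAt_id t).const_add 1).pow 2) (pow_ne_zero 2 ht))
  refine h.congr_deriv ?_
  simp only [id, Pi.pow_apply]
  field_simp
  ring

/-- First and second derivatives of `s ↦ g(t+cs) (ρ+2as+s²)^q`, the shape of the barrier on a line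
parallel to a coordinate axis. -/
lemma line_derivs {t c ρ a q : ℝ} (ht : 0 < t) (hρ : 0 < ρ) :
    ∃ f' : ℝ → ℝ,
      (∀ᶠ s in 𝓝 (0 : ℝ), HasDerivAt
        (fun s : ℝ => (t + c * s) ^ 3 / (1 + (t + c * s)) * (ρ + 2 * a * s + s ^ 2) ^ q) (f' s) s) ∧
      HasDerivAt f'
        (c ^ 2 * (2 - 2 / (1 + t) ^ 3) * ρ ^ q
          + 4 * q * (c * a) * (2 * t - 1 + 1 / (1 + t) ^ 2) * ρ ^ (q - 1)
          + t ^ 3 / (1 + t) * (2 * q * ρ ^ (q - 1) + 4 * q * (q - 1) * a ^ 2 * ρ ^ (q - 2))) 0 := by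
  have hl : ∀ s, HasDerivAt (fun s : ℝ => t + c * s) c s := fun s => by
    simpa using ((hasDerivAt_id s).const_mul c).const_add t
  have hP : ∀ s, HasDerivAt (fun s : ℝ => ρ + 2 * a * s + s ^ 2) (2 * a + 2 * s) s := fun s => by
    have := (((hasDerivAt_id s).const_mul (2 * a)).const_add ρ).add ((hasDerivAt_id s).pow 2)
    refine (this.congr_deriv (by simp)).congr_of_eventuallyEq (.of_forall fun s => by simp)
  have hD : ∀ s, HasDerivAt (fun s : ℝ => 2 * a + 2 * s) 2 s := fun s => by
    simpa using ((hasDerivAt_id s).const_mul (2 : ℝ)).const_add (2 * a)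
  have ht' : ∀ᶠ s in 𝓝 (0 : ℝ), 0 < t + c * s :=
    (hl 0).continuousAt.eventually_const_lt (by simpa using ht)
  have hP' : ∀ᶠ s in 𝓝 (0 : ℝ), 0 < ρ + 2 * a * s + s ^ 2 :=
    (hP 0).continuousAt.eventually_const_lt (by simpa using hρ)
  refine ⟨fun s => (2 * (t + c * s) - 1 + 1 / (1 + (t + c * s)) ^ 2) * c
      * (ρ + 2 * a * s + s ^ 2) ^ q
    + (t + c * s) ^ 3 / (1 + (t + c * s)) *
      ((2 * a + 2 * s) * q * (ρ + 2 * a * s + s ^ 2) ^ (q - 1)), ?_, ?_⟩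
  · filter_upwards [ht', hP'] with s h1 h2
    have hg := (hasDerivAt_profile (t := t + c * s) (by linarith)).comp s (hl s)
    exact hg.mul ((hP s).rpow_const (Or.inl h2.ne'))
  · have hn : 1 + (t + c * 0) ≠ 0 := by simp; linarith
    have hn2 : ρ + 2 * a * 0 + 0 ^ 2 ≠ 0 := by simpa using hρ.ne'
    have hg := (hasDerivAt_profile hn).comp (0 : ℝ) (hl 0)
    have hg' := (hasDerivAt_profile' hn).comp (0 : ℝ) (hl 0)
    have h1 := (hP 0).rpow_const (p := q) (Or.inl hn2)
    have h2 := (hP 0).rpow_const (p := q - 1) (Or.inl hn2)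
    have := ((hg'.mul_const c).mul h1).add (hg.mul (((hD 0).mul_const q).mul h2))
    refine this.congr_deriv ?_
    have e : q - 1 - 1 = q - 2 := by ring
    simp only [Function.comp, Pi.mul_apply, e, mul_zero, add_zero, zero_pow two_ne_zero]
    ring

lemma one_le_norm {d : ℕ} (l : Fin d) (x : EuclideanSpace ℝ (Fin d)) :
    1 + x l ≤ ‖x + EuclideanSpace.single l (1 : ℝ)‖ := by
  have h := PiLp.norm_apply_le (p := 2) (x + EuclideanSpace.single l (1 : ℝ)) l
  simp only [PiLp.add_apply, PiLp.single_apply, if_true, Real.norm_eq_abs] at h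
  have := le_abs_self (x l + 1)
  linarith

/-- The barrier on a line parallel to a coordinate axis has the shape treated in `line_derivs`. -/
lemma barrier_line {d : ℕ} (l i : Fin d) (m : ℝ) (x : EuclideanSpace ℝ (Fin d)) (s : ℝ) :
    barrier l m (x + s • EuclideanSpace.single i 1)
      = 1 / (6 * m) * ((x l + (if i = l then 1 else 0) * s) ^ 3
          / (1 + (x l + (if i = l then 1 else 0) * s))
        * (‖x + EuclideanSpace.single l (1 : ℝ)‖ ^ 2
            + 2 * (x + EuclideanSpace.single l (1 : ℝ)) i * s + s ^ 2) ^ (-m / 2)) := by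
  have e1 : (x + s • EuclideanSpace.single i (1 : ℝ)) l
      = x l + (if i = l then 1 else 0) * s := by
    by_cases h : i = l <;> simp [h]
  have e2 : ‖x + EuclideanSpace.single l (1 : ℝ)‖ ^ 2
            + 2 * (x + EuclideanSpace.single l (1 : ℝ)) i * s + s ^ 2
      = ‖x + s • EuclideanSpace.single i 1 + EuclideanSpace.single l (1 : ℝ)‖ ^ 2 := by
    rw [show x + s • EuclideanSpace.single i 1 + EuclideanSpace.single l (1 : ℝ)
      = (x + EuclideanSpace.single l (1 : ℝ)) + s • EuclideanSpace.single i 1 by abel,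
      norm_add_sq_real (x + EuclideanSpace.single l (1 : ℝ)), inner_smul_right, EuclideanSpace.inner_single_right, norm_smul]
    simp
    ring
  rw [barrier, e1, e2, ← Real.rpow_natCast ‖_‖ 2, ← Real.rpow_mul (norm_nonneg _)]
  rw [show ((2 : ℕ) : ℝ) * (-m / 2) = -m by push_cast; ring]
  generalize x l + (if i = l then 1 else 0) * s = t
  rw [← mul_assoc]
  congr 1
  rw [div_mul_div_comm, one_mul]

/-- The strict inequality `-Δ w_m < t² |x+e|^{-n-2}`, with `r = |x+e|` and `Δ w_m` in the expanded
form obtained by summing `line_derivs` over the axes. -/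
lemma test_ineq {n m t r : ℝ} (hm : 0 < m) (hnm : n ≤ m) (ht : 0 < t) (hr : 1 ≤ r) :
    -(t ^ 2 * r ^ (-n - 2)) < 1 / (6 * m) * ((2 - 2 / (1 + t) ^ 3) * (r ^ 2) ^ (-m / 2)
      + 4 * (-m / 2) * (t + 1) * (2 * t - 1 + 1 / (1 + t) ^ 2) * (r ^ 2) ^ (-m / 2 - 1)
      + t ^ 3 / (1 + t) * (2 * (-m / 2) * (n + 4) * (r ^ 2) ^ (-m / 2 - 1)
          + 4 * (-m / 2) * (-m / 2 - 1) * r ^ 2 * (r ^ 2) ^ (-m / 2 - 2))) := by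
  have hr0 : 0 < r := by linarith
  have hρ : 0 < r ^ 2 := by positivity
  have e1 : r ^ 2 * (r ^ 2) ^ (-m / 2 - 2) = (r ^ 2) ^ (-m / 2 - 1) := by
    rw [mul_comm, ← Real.rpow_add_one hρ.ne']
    ring_nf
  have e2 : (r ^ 2) ^ (-m / 2 - 1) = r ^ (-m - 2) := by
    rw [← Real.rpow_natCast, ← Real.rpow_mul hr0.le]
    push_cast
    ring_nf
  have h1 : r ^ (-m - 2) ≤ r ^ (-n - 2) := Real.rpow_le_rpow_of_exponent_le hr (by linarith)
  have hA : 0 < (r ^ 2) ^ (-m / 2) := Real.rpow_pos_of_pos hρ _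
  have hB : 0 < r ^ (-m - 2) := Real.rpow_pos_of_pos hr0 _
  have hG : 0 < 2 - 2 / (1 + t) ^ 3 := by
    have : 1 < (1 + t) ^ 3 := one_lt_pow₀ (by linarith) (by norm_num)
    have : 2 / (1 + t) ^ 3 < 2 := by
      rw [div_lt_iff₀ (by positivity)]
      linarith
    linarith
  rw [mul_assoc (4 * (-m / 2) * (-m / 2 - 1)), e1, e2]
  set A := (r ^ 2) ^ (-m / 2)
  set B := r ^ (-m - 2)
  have key : 1 / (6 * m) * ((2 - 2 / (1 + t) ^ 3) * A
      + 4 * (-m / 2) * (t + 1) * (2 * t - 1 + 1 / (1 + t) ^ 2) * B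
      + t ^ 3 / (1 + t) * (2 * (-m / 2) * (n + 4) * B + 4 * (-m / 2) * (-m / 2 - 1) * B))
      = 1 / (6 * m) * ((2 - 2 / (1 + t) ^ 3) * A) - t ^ 2 * B
        + (m - n) / 6 * (t ^ 3 / (1 + t)) * B := by
    have : 1 + t ≠ 0 := by linarith
    field_simp
    ring
  rw [key]
  have h2 : 0 < 1 / (6 * m) * ((2 - 2 / (1 + t) ^ 3) * A) := by positivity
  have h3 : 0 ≤ (m - n) / 6 * (t ^ 3 / (1 + t)) * B := by
    have : 0 ≤ m - n := by linarith
    positivity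
  have h4 : t ^ 2 * B ≤ t ^ 2 * r ^ (-n - 2) := by gcongr
  linarith

/-- For `m > 2` the barrier tends to zero at infinity in the closed half-space. -/
lemma barrier_small {d : ℕ} (l : Fin d) {m : ℝ} (hm : 2 < m) {ε : ℝ} (hε : 0 < ε) :
    ∃ R : ℝ, ∀ x : EuclideanSpace ℝ (Fin d), 0 ≤ x l → R ≤ ‖x‖ → barrier l m x < ε := by
  have h := (tendsto_rpow_neg_atTop (y := m - 2) (by linarith)).eventually_lt_const hε
  obtain ⟨R, hR⟩ := eventually_atTop.1 h
  refine ⟨R + 1, fun x hx hxR => ?_⟩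
  set r := ‖x + EuclideanSpace.single l (1 : ℝ)‖ with hr
  have h1 : 1 + x l ≤ r := one_le_norm l x
  have h2 : ‖x‖ ≤ r + 1 := by
    have := norm_sub_le (x + EuclideanSpace.single l (1 : ℝ)) (EuclideanSpace.single l (1 : ℝ))
    simpa using this
  have hr0 : 0 < r := by linarith
  refine lt_of_le_of_lt ?_ (hR r (by linarith))
  rw [barrier, ← hr, show -(m - 2) = -m + (2 : ℕ) by push_cast; ring, Real.rpow_add_natCast hr0.ne',
    mul_comm]
  gcongr
  rw [div_le_iff₀ (by positivity)]
  have h3 : (x l) ^ 3 ≤ r ^ 2 * (1 + x l) := by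
    have : (x l) ^ 2 ≤ r ^ 2 := by gcongr; linarith
    nlinarith
  have h4 : 0 ≤ r ^ 2 * (1 + x l) := by positivity
  nlinarith

lemma barrier_continuousOn {d : ℕ} (l : Fin d) {m : ℝ} (hm : 0 < m) :
    ContinuousOn (barrier l m) {x : EuclideanSpace ℝ (Fin d) | 0 ≤ x l} := by
  unfold barrier
  have hc : Continuous fun x : EuclideanSpace ℝ (Fin d) => x l := by fun_prop
  refine ContinuousOn.mul (ContinuousOn.div (by fun_prop) (by fun_prop) ?_)
    (ContinuousOn.rpow_const (by fun_prop) ?_)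
  · intro x hx
    have : 0 ≤ x l := hx
    positivity
  · intro x hx
    left
    have := one_le_norm l x
    have : 0 ≤ x l := hx
    linarith

/-- At a local minimum of `f - w_m` the Laplacian of `f` dominates that of `w_m`, the latter being
strictly larger than `-t² |x+e|^{-n-2}`. -/
lemma laplacian_at_min {n : ℕ} (l : Fin (n + 4)) {m : ℝ} (hm : 0 < m) (hnm : (n : ℝ) ≤ m)
    {f : EuclideanSpace ℝ (Fin (n + 4)) → ℝ} {x : EuclideanSpace ℝ (Fin (n + 4))}
    (hx : 0 < x l) (hf : ContDiffAt ℝ 2 f x) (hmin : IsLocalMin (fun y => f y - barrier l m y) x) :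
    -((x l) ^ 2 * ‖x + EuclideanSpace.single l (1 : ℝ)‖ ^ (-(n : ℝ) - 2)) < laplacian f x := by
  set z := x + EuclideanSpace.single l (1 : ℝ) with hz
  have hr1 : 1 ≤ ‖z‖ := by
    have := one_le_norm l x
    linarith
  have hpos : 0 < ‖z‖ ^ 2 := by positivity
  have hstep : ∀ i : Fin (n + 4),
      1 / (6 * m) * ((if i = l then (1 : ℝ) else 0) ^ 2 * (2 - 2 / (1 + x l) ^ 3)
          * (‖z‖ ^ 2) ^ (-m / 2)
        + 4 * (-m / 2) * ((if i = l then (1 : ℝ) else 0) * z i)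
          * (2 * x l - 1 + 1 / (1 + x l) ^ 2) * (‖z‖ ^ 2) ^ (-m / 2 - 1)
        + (x l) ^ 3 / (1 + x l) * (2 * (-m / 2) * (‖z‖ ^ 2) ^ (-m / 2 - 1)
          + 4 * (-m / 2) * (-m / 2 - 1) * (z i) ^ 2 * (‖z‖ ^ 2) ^ (-m / 2 - 2)))
      ≤ fderiv ℝ (fun y => fderiv ℝ f y (EuclideanSpace.single i 1)) x
          (EuclideanSpace.single i 1) := by
    intro i
    set v : EuclideanSpace ℝ (Fin (n + 4)) := EuclideanSpace.single i 1 with hv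
    obtain ⟨w', hw1, hw2⟩ := line_derivs (t := x l) (c := if i = l then (1 : ℝ) else 0)
      (ρ := ‖z‖ ^ 2) (a := z i) (q := -m / 2) hx hpos
    have hline : ∀ s : ℝ, HasDerivAt (fun s : ℝ => x + s • v) v s := fun s => by
      simpa using ((hasDerivAt_id s).smul_const v).const_add x
    have hx0 : x + (0 : ℝ) • v = x := by simp
    have htend : Tendsto (fun s : ℝ => x + s • v) (𝓝 0) (𝓝 x) := by
      have := (hline 0).continuousAt.tendsto
      rwa [hx0] at this
    have hd : ∀ᶠ y in 𝓝 x, DifferentiableAt ℝ f y := by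
      filter_upwards [hf.eventually (by simp)] with y hy
      exact hy.differentiableAt (by norm_num)
    have hfd : DifferentiableAt ℝ (fun y => fderiv ℝ f y v) x := by
      have : DifferentiableAt ℝ (fderiv ℝ f) x :=
        (hf.fderiv_right (m := 1) (by norm_num)).differentiableAt (by norm_num)
      exact this.clm_apply (differentiableAt_const v)
    have h1 : ∀ᶠ s in 𝓝 (0 : ℝ), HasDerivAt (fun s : ℝ => f (x + s • v))
        (fderiv ℝ f (x + s • v) v) s := by
      filter_upwards [htend.eventually hd] with s hs
      exact hs.hasFDerivAt.comp_hasDerivAt s (hline s)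
    have h2 : HasDerivAt (fun s : ℝ => fderiv ℝ f (x + s • v) v)
        (fderiv ℝ (fun y => fderiv ℝ f y v) x v) 0 := by
      have : HasFDerivAt (fun y => fderiv ℝ f y v) (fderiv ℝ (fun y => fderiv ℝ f y v) x)
          (x + (0 : ℝ) • v) := by
        rw [hx0]; exact hfd.hasFDerivAt
      exact this.comp_hasDerivAt (0 : ℝ) (hline 0)
    have hmin0 : IsLocalMin (fun s : ℝ => f (x + s • v) - barrier l m (x + s • v)) 0 := by
      have := htend.eventually hmin
      filter_upwards [this] with s hs
      simpa using hs
    simp only [hv, barrier_line] at hmin0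
    have := second_deriv_nonneg hmin0 (f' := fun s => fderiv ℝ f (x + s • v) v
      - 1 / (6 * m) * w' s) (by
        filter_upwards [h1, hw1] with s h h'
        exact h.sub (h'.const_mul _)) (h2.sub (hw2.const_mul _))
    linarith
  have hsum := Finset.sum_le_sum fun i (_ : i ∈ Finset.univ) => hstep i
  refine lt_of_lt_of_le (test_ineq hm hnm hx hr1) (le_trans (le_of_eq ?_) hsum)
  have hn : ∑ i, (z i) ^ 2 = ‖z‖ ^ 2 := by
    rw [EuclideanSpace.norm_sq_eq]; simp
  have hzl : z l = x l + 1 := by simp [hz]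
  have hc : ∑ i, (if i = l then (1 : ℝ) else 0) ^ 2 = 1 := by simp
  have hca : ∑ i, (if i = l then (1 : ℝ) else 0) * z i = x l + 1 := by simp [hzl]
  rw [← Finset.mul_sum, Finset.sum_add_distrib, Finset.sum_add_distrib, ← Finset.mul_sum,
    Finset.sum_add_distrib, ← Finset.sum_mul, ← Finset.sum_mul, ← Finset.sum_mul, ← Finset.sum_mul,
    ← Finset.mul_sum, ← Finset.sum_mul, ← Finset.mul_sum, ← Finset.sum_mul,
    ← Finset.mul_sum, hn, hc, hca]
  simp only [Finset.sum_const, Finset.card_univ, Fintype.card_fin, nsmul_eq_mul]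
  push_cast
  ring

/-- Comparison by the maximum principle: `m > 2` makes the barrier decay at infinity, so a negative
value of `Λ - w_m` would be attained as an interior minimum. -/
lemma barrier_le {n : ℕ} (l : Fin (n + 4)) {m : ℝ} (hm : 2 < m) (hnm : (n : ℝ) ≤ m)
    (Λ : EuclideanSpace ℝ (Fin (n + 4)) → ℝ)
    (hΛcont : ContinuousOn Λ {x : EuclideanSpace ℝ (Fin (n + 4)) | 0 ≤ x l})
    (hΛC2 : ContDiffOn ℝ 2 Λ {x : EuclideanSpace ℝ (Fin (n + 4)) | 0 < x l})
    (hpde : ∀ x : EuclideanSpace ℝ (Fin (n + 4)), 0 < x l →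
      -laplacian Λ x
        = (x l) ^ 2 * ‖x + EuclideanSpace.single l (1 : ℝ)‖ ^ (-(n : ℝ) - 2))
    (hbdry : ∀ x : EuclideanSpace ℝ (Fin (n + 4)), x l = 0 → Λ x = 0)
    (hdecay : ∀ ε > (0 : ℝ), ∃ R : ℝ, ∀ x : EuclideanSpace ℝ (Fin (n + 4)),
      0 ≤ x l → R ≤ ‖x‖ → |Λ x| < ε)
    (x : EuclideanSpace ℝ (Fin (n + 4))) (hx : 0 ≤ x l) : barrier l m x ≤ Λ x := by
  by_contra! hneg
  have hm0 : 0 < m := by linarith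
  set δ := (barrier l m x - Λ x) / 2 with hδ
  have hδ0 : 0 < δ := by rw [hδ]; linarith
  obtain ⟨R₁, hR₁⟩ := hdecay δ hδ0
  obtain ⟨R₂, hR₂⟩ := barrier_small l hm hδ0
  have hlc : Continuous fun y : EuclideanSpace ℝ (Fin (n + 4)) => y l := by fun_prop
  have hcl : IsClosed {y : EuclideanSpace ℝ (Fin (n + 4)) | 0 ≤ y l} :=
    isClosed_le continuous_const hlc
  have hout : ∀ y : EuclideanSpace ℝ (Fin (n + 4)), 0 ≤ y l → max R₁ R₂ ≤ ‖y‖ →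
      Λ x - barrier l m x < Λ y - barrier l m y := by
    intro y hy hyR
    have h1 := (abs_lt.1 (hR₁ y hy (le_trans (le_max_left _ _) hyR))).1
    have h2 := hR₂ y hy (le_trans (le_max_right _ _) hyR)
    linarith
  have hcont : ContinuousOn (fun y => Λ y - barrier l m y)
      {y : EuclideanSpace ℝ (Fin (n + 4)) | 0 ≤ y l} := hΛcont.sub (barrier_continuousOn l hm0)
  obtain ⟨y, hy, hymin⟩ := hcont.exists_isMinOn' hcl (x₀ := x) hx (by
    rw [eventually_inf_principal]
    have := (tendsto_norm_cocompact_atTop (E := EuclideanSpace ℝ (Fin (n + 4)))).eventually_ge_atTop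
      (max R₁ R₂)
    filter_upwards [this] with y hy hyl
    exact (hout y hyl hy).le)
  have hyx : Λ y - barrier l m y ≤ Λ x - barrier l m x := hymin hx
  have hypos : 0 < y l := by
    rcases (show 0 ≤ y l from hy).lt_or_eq with h | h
    · exact h
    · have h1 := hbdry y h.symm
      have h2 : barrier l m y = 0 := by simp [barrier, ← h]
      linarith
  have hopen : {y : EuclideanSpace ℝ (Fin (n + 4)) | 0 < y l} ∈ 𝓝 y :=
    (isOpen_lt continuous_const hlc).mem_nhds hypos
  have hloc : IsLocalMin (fun y => Λ y - barrier l m y) y :=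
    hymin.isLocalMin (mem_of_superset hopen fun z hz => le_of_lt (mem_ofPred.1 hz))
  have h1 := laplacian_at_min l hm0 hnm hypos (hΛC2.contDiffAt hopen) hloc
  have h2 := hpde y hypos
  linarith

/-- Lower bound for the solution `Λ̃` of `−ΔΛ̃ = x_{n+4}²|x+e_{n+4}|^{−n−2}` in `ℝ^{n+4}₊`
with zero boundary values and decay at infinity:
`Λ̃(x) ≥ (x_{n+4}³/(6n(1+x_{n+4}))) |x+e_{n+4}|^{−n} ≥ 0` on the closed half-space. -/
theorem Lambda_lower_bound (n : ℕ) (hn : 1 ≤ n)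
    (Λ : EuclideanSpace ℝ (Fin (n + 4)) → ℝ)
    (hΛcont : ContinuousOn Λ {x : EuclideanSpace ℝ (Fin (n + 4)) | 0 ≤ x ⟨n + 3, by omega⟩})
    (hΛC2 : ContDiffOn ℝ 2 Λ {x : EuclideanSpace ℝ (Fin (n + 4)) | 0 < x ⟨n + 3, by omega⟩})
    (hpde : ∀ x : EuclideanSpace ℝ (Fin (n + 4)), 0 < x ⟨n + 3, by omega⟩ →
      -laplacian Λ x
        = (x ⟨n + 3, by omega⟩) ^ 2
            * ‖x + EuclideanSpace.single (⟨n + 3, by omega⟩ : Fin (n + 4)) (1 : ℝ)‖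
                ^ (-(n : ℝ) - 2))
    (hbdry : ∀ x : EuclideanSpace ℝ (Fin (n + 4)), x ⟨n + 3, by omega⟩ = 0 → Λ x = 0)
    (hdecay : ∀ ε > (0 : ℝ), ∃ R : ℝ, ∀ x : EuclideanSpace ℝ (Fin (n + 4)),
      0 ≤ x ⟨n + 3, by omega⟩ → R ≤ ‖x‖ → |Λ x| < ε) :
    ∀ x : EuclideanSpace ℝ (Fin (n + 4)), 0 ≤ x ⟨n + 3, by omega⟩ →
      (x ⟨n + 3, by omega⟩) ^ 3 / (6 * (n : ℝ) * (1 + x ⟨n + 3, by omega⟩))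
          * ‖x + EuclideanSpace.single (⟨n + 3, by omega⟩ : Fin (n + 4)) (1 : ℝ)‖
              ^ (-(n : ℝ)) ≤ Λ x
      ∧ 0 ≤ (x ⟨n + 3, by omega⟩) ^ 3 / (6 * (n : ℝ) * (1 + x ⟨n + 3, by omega⟩))
          * ‖x + EuclideanSpace.single (⟨n + 3, by omega⟩ : Fin (n + 4)) (1 : ℝ)‖
              ^ (-(n : ℝ)) := by
  intro x hx
  have hn0 : (0 : ℝ) < n := by exact_mod_cast hn
  refine ⟨?_, by positivity⟩
  have key := fun m hm hnm => barrier_le (m := m) (⟨n + 3, by omega⟩ : Fin (n + 4)) hm hnm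
    Λ hΛcont hΛC2 hpde hbdry hdecay
  rcases Nat.lt_or_ge 2 n with h3 | h3
  · exact key n (by exact_mod_cast h3) le_rfl x hx
  -- For `n ≤ 2` no such `Λ` exists: the barriers with `m ↓ 2` keep it away from `0` along the normal.
  · exfalso
    have hn2 : (n : ℝ) ≤ 2 := by exact_mod_cast h3
    obtain ⟨R, hR⟩ := hdecay (1 / 100) (by norm_num)
    set l : Fin (n + 4) := ⟨n + 3, by omega⟩ with hl
    set t := max R 1
    have ht : 1 ≤ t := le_max_right _ _
    set y : EuclideanSpace ℝ (Fin (n + 4)) := EuclideanSpace.single l t with hy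
    have hyl : y l = t := by simp [hy]
    have hyn : ‖y‖ = t := by simp [hy, abs_of_nonneg (by linarith : 0 ≤ t)]
    have hye : ‖y + EuclideanSpace.single l (1 : ℝ)‖ = 1 + t := by
      have : y + EuclideanSpace.single l (1 : ℝ) = EuclideanSpace.single l (t + 1) := by
        ext i
        by_cases hi : i = l <;> simp [hy, hi]
      rw [this, PiLp.norm_single, Real.norm_of_nonneg (by linarith), add_comm]
    have hsmall := (abs_lt.1 (hR y (by rw [hyl]; linarith) (by rw [hyn]; exact le_max_left _ _))).2
    have hev : ∀ m > 2, barrier l m y ≤ Λ y := fun m hm =>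
      key m hm (by linarith) y (by rw [hyl]; linarith)
    have h1t : (1 : ℝ) + t ≠ 0 := by linarith
    have hct : ContinuousAt (fun m => barrier l m y) 2 := by
      simp only [barrier, hyl, hye]
      refine ContinuousAt.mul (ContinuousAt.div (by fun_prop) (by fun_prop) ?_) ?_
      · positivity
      · exact (Real.continuousAt_const_rpow h1t).comp (by fun_prop)
    have hlim : barrier l 2 y ≤ Λ y := by
      refine le_of_tendsto (hct.tendsto.mono_left (nhdsWithin_le_nhds (s := Ioi 2))) ?_
      filter_upwards [self_mem_nhdsWithin] with m hm using hev m hm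
    have hval : 1 / 96 ≤ barrier l 2 y := by
      rw [barrier, hyl, hye, Real.rpow_neg (by linarith)]
      norm_num only [Real.rpow_two]
      rw [← div_eq_mul_inv, div_div, le_div_iff₀ (by positivity)]
      -- This is `(1 + t)³ ≤ (2t)³`.
      have : (1 + t) ^ 3 ≤ (2 * t) ^ 3 := by gcongr; linarith
      nlinarith
    linarith
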